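/- Let g : ℝ → ℂ be 2π-periodic of class C⁵ and let ρ be a filter function. For a discrete function ψ define the commutator [H_h, g](ψ)_i = (H_h(g(α_·)ψ))_i − g(α_i)(H_h ψ)_i. Then there exists a constant c > 0, depending only on g and ρ and not on N or ψ, such that for every even integer N ≥ 2, every discrete function φ, and every k ∈ {0, 1, 2}: ‖D_h^k([H_h, g](φ^p))‖_{l²} ≤ c ‖φ‖_{l²} and ‖[H_h, g]((S_h^k φ)^p)‖_{l²} ≤ c ‖φ‖_{l²}. -/

import Mathlib

open scoped BigOperators
open Finset

noncomputable section

/-- Grid spacing `h = 2π/N`. -/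
def hgrid (N : ℤ) : ℝ := 2 * Real.pi / N

/-- Grid points `α_j = j h`. -/
def gridPt (N : ℤ) (j : ℤ) : ℝ := j * hgrid N

/-- Index set `{-N/2+1, …, N/2}`. -/
def idxs (N : ℤ) : Finset ℤ := Finset.Icc (-(N / 2) + 1) (N / 2)

/-- Discrete Fourier coefficient `f̂_k`. -/
def dft (N : ℤ) (f : ℤ → ℂ) (k : ℤ) : ℂ :=
  (N : ℂ)⁻¹ * ∑ j ∈ idxs N, f j * Complex.exp (-(Complex.I * (k : ℂ) * (gridPt N j : ℂ)))

/-- Reconstruction of a discrete function from Fourier coefficients. -/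
def idft (N : ℤ) (c : ℤ → ℂ) (j : ℤ) : ℂ :=
  ∑ k ∈ idxs N, c k * Complex.exp (Complex.I * (k : ℂ) * (gridPt N j : ℂ))

/-- The pseudo-spectral derivative `S_h`. -/
def Sh (N : ℤ) (f : ℤ → ℂ) : ℤ → ℂ :=
  idft N fun k => if k = N / 2 then 0 else Complex.I * (k : ℂ) * dft N f k

/-- The pseudo-spectral antiderivative `S_h⁻¹`. -/
def Shinv (N : ℤ) (f : ℤ → ℂ) : ℤ → ℂ :=
  idft N fun k => if k = 0 then 0 else dft N f k / (Complex.I * (k : ℂ))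

/-- The filtered discrete function `f^p`. -/
def filterP (N : ℤ) (ρ : ℝ → ℝ) (f : ℤ → ℂ) : ℤ → ℂ :=
  idft N fun k => (ρ (gridPt N k) : ℂ) * dft N f k

/-- The filtered derivative `D_h`. -/
def Dh (N : ℤ) (ρ : ℝ → ℝ) (f : ℤ → ℂ) : ℤ → ℂ :=
  idft N fun k => Complex.I * (k : ℂ) * (ρ (gridPt N k) : ℂ) * dft N f k

/-- Discrete `l²` norm. -/
def l2norm (N : ℤ) (f : ℤ → ℂ) : ℝ :=
  Real.sqrt (hgrid N * ∑ j ∈ idxs N, ‖f j‖ ^ 2)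

/-- Discrete Hilbert transform `H_h`. -/
def Hh (N : ℤ) (f : ℤ → ℂ) (i : ℤ) : ℂ :=
  ((hgrid N / Real.pi : ℝ) : ℂ) *
    ∑ j ∈ (idxs N).filter (fun j => Odd (j - i)),
      f j * (Real.cot ((gridPt N i - gridPt N j) / 2) : ℂ)

/-- Discrete inner product `(f,g)_h`. -/
def dip (N : ℤ) (f g : ℤ → ℂ) : ℂ :=
  (hgrid N : ℂ) * ∑ j ∈ idxs N, (starRingEnd ℂ) (f j) * g j

/-- Discrete mean `⟨f⟩_h`. -/
def dmean (N : ℤ) (f : ℤ → ℂ) : ℂ :=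
  (N : ℂ)⁻¹ * ∑ j ∈ idxs N, f j

/-- The discrete function of samples of a periodic function. -/
def samples (N : ℤ) (f : ℝ → ℂ) : ℤ → ℂ := fun j => f (gridPt N j)

/-- Fourier coefficient of a `2π`-periodic function. -/
def fourierCoeffP (f : ℝ → ℂ) (k : ℤ) : ℂ :=
  ((2 * Real.pi)⁻¹ : ℝ) * ∫ α in (-Real.pi)..Real.pi, f α * Complex.exp (-(Complex.I * (k : ℂ) * (α : ℂ)))

/-- Sobolev norm `‖f‖_s`. -/
def sobolevNorm (s : ℕ) (f : ℝ → ℂ) : ℝ :=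
  Real.sqrt (∑' k : ℤ, (1 + (k : ℝ) ^ 2) ^ s * ‖fourierCoeffP f k‖ ^ 2)

/-- A filter (cutoff) function for numerical filtering. -/
structure IsFilter (ρ : ℝ → ℝ) : Prop where
  even : ∀ x, ρ (-x) = ρ x
  nonneg : ∀ x, 0 ≤ ρ x
  smooth : ∃ r : ℕ, 2 < r ∧ ContDiff ℝ r ρ
  zero_at_pi : ρ Real.pi = 0
  zero_at_neg_pi : ρ (-Real.pi) = 0
  deriv_zero_at_pi : deriv ρ Real.pi = 0
  deriv_zero_at_neg_pi : deriv ρ (-Real.pi) = 0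
  one_near_zero : ∃ μ : ℝ, 0 < μ ∧ μ < 1 ∧ ∀ x : ℝ, |x| ≤ μ * Real.pi → ρ x = 1

/-- The commutator `[H_h, g](ψ)` of the discrete Hilbert transform with multiplication
by the samples of a smooth function `g`. -/
def commHh (N : ℤ) (g : ℝ → ℂ) (ψ : ℤ → ℂ) (i : ℤ) : ℂ :=
  Hh N (fun j => g (gridPt N j) * ψ j) i - g (gridPt N i) * Hh N ψ i

/-- The grid character `j ↦ e^{i q α_j}`. -/
def gridExp (N q j : ℤ) : ℂ := Complex.exp (Complex.I * (q : ℂ) * (gridPt N j : ℂ))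

lemma gridExp_add_left (N q r j : ℤ) :
    gridExp N (q + r) j = gridExp N q j * gridExp N r j := by
  simp only [gridExp, ← Complex.exp_add]
  push_cast
  ring_nf

lemma gridExp_add_right (N q j i : ℤ) :
    gridExp N q (j + i) = gridExp N q j * gridExp N q i := by
  simp only [gridExp, gridPt, ← Complex.exp_add]
  push_cast
  ring_nf

lemma gridExp_comm (N q j : ℤ) : gridExp N q j = gridExp N j q := by
  simp only [gridExp, gridPt]
  push_cast
  ring_nf

lemma exp_neg_eq_gridExp (N q j : ℤ) :
    Complex.exp (-(Complex.I * (q : ℂ) * (gridPt N j : ℂ))) = gridExp N (-q) j := by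
  simp only [gridExp]
  push_cast
  ring_nf

lemma norm_gridExp (N q j : ℤ) : ‖gridExp N q j‖ = 1 := by
  have : Complex.I * (q : ℂ) * (gridPt N j : ℂ) = ((q * gridPt N j : ℝ) : ℂ) * Complex.I := by
    push_cast
    ring
  rw [gridExp, this, Complex.norm_exp_ofReal_mul_I]

lemma conj_gridExp (N q j : ℤ) : (starRingEnd ℂ) (gridExp N q j) = gridExp N (-q) j := by
  simp only [gridExp, ← Complex.exp_conj]
  simp

lemma gridExp_eq_one_iff {N : ℤ} (hN : 0 < N) (q j : ℤ) : gridExp N q j = 1 ↔ N ∣ q * j := by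
  have hN' : (N : ℂ) ≠ 0 := by exact_mod_cast hN.ne'
  have hpi : (Real.pi : ℂ) ≠ 0 := by exact_mod_cast Real.pi_ne_zero
  rw [gridExp, Complex.exp_eq_one_iff]
  refine exists_congr fun n => ?_
  simp only [gridPt, hgrid]
  push_cast
  constructor
  · intro h
    field_simp at h
    exact_mod_cast h
  · intro h
    have h' : (q : ℂ) * j = N * n := by exact_mod_cast h
    field_simp
    exact h'

lemma gridExp_congr {N : ℤ} (hN : 0 < N) {q r : ℤ} (h : N ∣ q - r) (j : ℤ) :
    gridExp N q j = gridExp N r j := by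
  have h1 : gridExp N (q - r) j = 1 := (gridExp_eq_one_iff hN _ _).2 (h.mul_right _)
  have h2 := gridExp_add_left N (q - r) r j
  rwa [sub_add_cancel, h1, one_mul] at h2

lemma gridExp_periodic {N : ℤ} (hN : 0 < N) (q : ℤ) : Function.Periodic (gridExp N q) N := by
  intro j
  rw [gridExp_add_right, (gridExp_eq_one_iff hN q N).2 (dvd_mul_left _ _), mul_one]

lemma eq_of_mem_idxs_of_dvd {N : ℤ} (h2 : Even N) {k l : ℤ} (hk : k ∈ idxs N) (hl : l ∈ idxs N)
    (h : N ∣ k - l) : k = l := by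
  obtain ⟨M, rfl⟩ := h2
  simp only [idxs, Finset.mem_Icc] at hk hl
  have := Int.eq_zero_of_abs_lt_dvd h (by rw [abs_lt]; omega)
  omega

lemma card_idxs {N : ℤ} (hN : 0 < N) (h2 : Even N) : ((idxs N).card : ℝ) = N := by
  obtain ⟨M, rfl⟩ := h2
  have : (((idxs (M + M)).card : ℤ)) = M + M := by
    simp only [idxs, Int.card_Icc]
    omega
  exact_mod_cast this

/-- The representative in `idxs N` of a residue class modulo `N`. -/
def idxRep (N q : ℤ) : ℤ := (q + (N / 2 - 1)) % N - (N / 2 - 1)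

lemma idxRep_mem {N : ℤ} (hN : 0 < N) (h2 : Even N) (q : ℤ) : idxRep N q ∈ idxs N := by
  have h1 := Int.emod_nonneg (q + (N / 2 - 1)) hN.ne'
  have h3 := Int.emod_lt_of_pos (q + (N / 2 - 1)) hN
  obtain ⟨M, hM⟩ := h2
  simp only [idxs, idxRep, Finset.mem_Icc]
  omega

lemma dvd_sub_idxRep (N q : ℤ) : N ∣ q - idxRep N q := by
  have := Int.dvd_self_sub_emod (x := q + (N / 2 - 1)) (m := N)
  rwa [idxRep, ← sub_add, sub_add_eq_add_sub]

lemma sum_idxs_shift_one {N : ℤ} (hN : 0 < N) (h2 : Even N) {F : ℤ → ℂ}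
    (hF : Function.Periodic F N) : ∑ j ∈ idxs N, F (j + 1) = ∑ j ∈ idxs N, F j := by
  obtain ⟨M, rfl⟩ := h2
  have hM : 0 < M := by omega
  have hd : (M + M) / 2 = M := by omega
  simp only [idxs, hd]
  have e1 : ∑ j ∈ Finset.Icc (-M + 1) M, F (j + 1) = ∑ j ∈ Finset.Icc (-M + 2) (M + 1), F j := by
    refine Finset.sum_bij (fun j _ => j + 1) ?_ ?_ ?_ ?_
    · intro a ha
      simp only [Finset.mem_Icc] at ha ⊢
      omega
    · intro a _ b _ h
      omega
    · intro b hb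
      simp only [Finset.mem_Icc] at hb
      exact ⟨b - 1, by simp only [Finset.mem_Icc]; omega, by omega⟩
    · intros
      rfl
  have e2 : Finset.Icc (-M + 1) M = insert (-M + 1) (Finset.Icc (-M + 2) M) := by
    ext x
    simp only [Finset.mem_Icc, Finset.mem_insert]
    omega
  have e3 : Finset.Icc (-M + 2) (M + 1) = insert (M + 1) (Finset.Icc (-M + 2) M) := by
    ext x
    simp only [Finset.mem_Icc, Finset.mem_insert]
    omega
  rw [e1, e2, e3, Finset.sum_insert (by simp), Finset.sum_insert (by simp)]
  have := hF (-M + 1)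
  rw [← this]
  ring_nf

lemma sum_idxs_shift {N : ℤ} (hN : 0 < N) (h2 : Even N) {F : ℤ → ℂ}
    (hF : Function.Periodic F N) (i : ℤ) : ∑ j ∈ idxs N, F (j + i) = ∑ j ∈ idxs N, F j := by
  have hper : ∀ a : ℤ, Function.Periodic (fun j => F (j + a)) N := fun a j => by
    have := hF (j + a)
    simp only at this ⊢
    rw [← this]
    ring_nf
  induction i with
  | zero => simp
  | succ n ih =>
    rw [← ih, ← sum_idxs_shift_one hN h2 (hper n)]
    refine Finset.sum_congr rfl fun j _ => ?_
    ring_nf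
  | pred n ih =>
    rw [← ih, ← sum_idxs_shift_one hN h2 (hper (-n - 1))]
    refine Finset.sum_congr rfl fun j _ => ?_
    ring_nf

lemma sum_gridExp {N : ℤ} (hN : 0 < N) (h2 : Even N) (q : ℤ) :
    ∑ j ∈ idxs N, gridExp N q j = if N ∣ q then (N : ℂ) else 0 := by
  split_ifs with h
  · have : ∀ j ∈ idxs N, gridExp N q j = 1 := fun j _ =>
      (gridExp_eq_one_iff hN q j).2 (h.mul_right _)
    rw [Finset.sum_congr rfl this]
    simp only [Finset.sum_const, nsmul_eq_mul, mul_one]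
    exact_mod_cast card_idxs hN h2
  · have h1 := sum_idxs_shift_one hN h2 (gridExp_periodic hN q)
    simp only [gridExp_add_right, ← Finset.sum_mul] at h1
    have h3 : gridExp N q 1 ≠ 1 := by
      rw [Ne, gridExp_eq_one_iff hN, mul_one]
      exact h
    by_contra hS
    exact h3 (mul_left_cancel₀ hS (by rw [h1, mul_one]))

lemma idft_eq_sum_gridExp (N : ℤ) (c : ℤ → ℂ) (j : ℤ) :
    idft N c j = ∑ k ∈ idxs N, c k * gridExp N k j := rfl

lemma dft_gridExp {N : ℤ} (hN : 0 < N) (h2 : Even N) (q k : ℤ) :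
    dft N (gridExp N q) k = if N ∣ q - k then 1 else 0 := by
  have hN' : (N : ℂ) ≠ 0 := by exact_mod_cast hN.ne'
  simp only [dft, exp_neg_eq_gridExp, ← gridExp_add_left]
  rw [sum_gridExp hN h2, ← sub_eq_add_neg]
  split_ifs <;> simp [hN']

lemma dft_sum {ι : Type*} (N : ℤ) (s : Finset ι) (a : ι → ℂ) (F : ι → ℤ → ℂ) (k : ℤ) :
    dft N (fun j => ∑ x ∈ s, a x * F x j) k = ∑ x ∈ s, a x * dft N (F x) k := by
  simp only [dft, Finset.sum_mul, Finset.mul_sum]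
  rw [Finset.sum_comm]
  refine Finset.sum_congr rfl fun x _ => Finset.sum_congr rfl fun j _ => ?_
  ring

lemma dft_idft {N : ℤ} (hN : 0 < N) (h2 : Even N) (c : ℤ → ℂ) {k : ℤ} (hk : k ∈ idxs N) :
    dft N (idft N c) k = c k := by
  have : idft N c = fun j => ∑ l ∈ idxs N, c l * gridExp N l j := rfl
  rw [this, dft_sum, Finset.sum_eq_single_of_mem k hk]
  · simp [dft_gridExp hN h2]
  · intro l hl hlk
    rw [dft_gridExp hN h2, if_neg fun h => hlk (eq_of_mem_idxs_of_dvd h2 hl hk h), mul_zero]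

lemma idft_mul_dft_sum {ι : Type*} {N : ℤ} (hN : 0 < N) (h2 : Even N) (m : ℤ → ℂ)
    (s : Finset ι) (a : ι → ℂ) (Q : ι → ℤ) :
    idft N (fun k => m k * dft N (fun j => ∑ x ∈ s, a x * gridExp N (Q x) j) k) =
      fun j => ∑ x ∈ s, a x * m (idxRep N (Q x)) * gridExp N (Q x) j := by
  funext j
  simp only [idft, dft_sum, Finset.mul_sum, Finset.sum_mul]
  rw [Finset.sum_comm]
  refine Finset.sum_congr rfl fun x _ => ?_
  have hr := idxRep_mem hN h2 (Q x)
  have hd := dvd_sub_idxRep N (Q x)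
  rw [Finset.sum_eq_single_of_mem _ hr]
  · rw [dft_gridExp hN h2, if_pos hd, ← gridExp, gridExp_congr hN hd]
    ring
  · intro k hk hne
    rw [dft_gridExp hN h2, if_neg]
    · simp
    · intro h
      refine hne (eq_of_mem_idxs_of_dvd h2 hk hr ?_)
      have := dvd_sub hd h
      rwa [sub_sub_sub_cancel_left] at this

lemma idft_dft {N : ℤ} (hN : 0 < N) (h2 : Even N) (f : ℤ → ℂ) {j : ℤ} (hj : j ∈ idxs N) :
    idft N (dft N f) j = f j := by
  have hN' : (N : ℂ) ≠ 0 := by exact_mod_cast hN.ne'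
  simp only [idft, dft, exp_neg_eq_gridExp, Finset.mul_sum, Finset.sum_mul]
  rw [Finset.sum_comm]
  have key : ∀ i ∈ idxs N, (∑ k ∈ idxs N, (N : ℂ)⁻¹ * (f i * gridExp N (-k) i) *
      Complex.exp (Complex.I * (k : ℂ) * (gridPt N j : ℂ))) =
      (N : ℂ)⁻¹ * f i * if N ∣ j - i then (N : ℂ) else 0 := by
    intro i _
    rw [← sum_gridExp hN h2, Finset.mul_sum]
    refine Finset.sum_congr rfl fun k _ => ?_
    have h1 : gridExp N (-k) i = gridExp N (-i) k := by
      rw [gridExp, gridExp, gridPt, gridPt]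
      push_cast
      ring_nf
    rw [← gridExp, h1, gridExp_comm N k j, sub_eq_add_neg, gridExp_add_left]
    ring
  rw [Finset.sum_congr rfl key, Finset.sum_eq_single_of_mem j hj]
  · simp only [sub_self, dvd_zero, if_true]
    field_simp
  · intro i hi hij
    rw [if_neg fun h => hij (eq_of_mem_idxs_of_dvd h2 hj hi h).symm, mul_zero]

lemma idft_dft_of_periodic {N : ℤ} (hN : 0 < N) (h2 : Even N) {f : ℤ → ℂ}
    (hf : Function.Periodic f N) : idft N (dft N f) = f := by
  funext j
  obtain ⟨t, ht⟩ := dvd_sub_idxRep N j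
  have hj : j = idxRep N j + t * N := by linarith
  have hp : Function.Periodic (idft N (dft N f)) N := fun i =>
    Finset.sum_congr rfl fun k _ => congrArg _ (gridExp_periodic hN k i)
  have e1 := hp.int_mul t (idxRep N j)
  have e2 := hf.int_mul t (idxRep N j)
  simp only [Int.cast_id] at e1 e2
  rw [← hj] at e1 e2
  rw [e1, e2, idft_dft hN h2 f (idxRep_mem hN h2 j)]

lemma hgrid_pos {N : ℤ} (hN : 0 < N) : 0 < hgrid N := by
  have : (0 : ℝ) < N := by exact_mod_cast hN
  unfold hgrid
  positivity

lemma l2norm_congr {N : ℤ} {f g : ℤ → ℂ} (h : ∀ j ∈ idxs N, ‖f j‖ = ‖g j‖) :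
    l2norm N f = l2norm N g := by
  rw [l2norm, l2norm, Finset.sum_congr rfl fun j hj => by rw [h j hj]]

lemma l2norm_eq_norm_toLp {N : ℤ} (hN : 0 < N) (f : ℤ → ℂ) :
    l2norm N f = Real.sqrt (hgrid N) * ‖WithLp.toLp 2 (fun j : idxs N => f j)‖ := by
  rw [EuclideanSpace.norm_eq, ← Real.sqrt_mul (hgrid_pos hN).le, l2norm]
  congr 2
  exact (Finset.sum_coe_sort (idxs N) fun j => ‖f j‖ ^ 2).symm

lemma l2norm_sum_le {ι : Type*} {N : ℤ} (hN : 0 < N) (s : Finset ι) (F : ι → ℤ → ℂ) :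
    l2norm N (fun j => ∑ x ∈ s, F x j) ≤ ∑ x ∈ s, l2norm N (F x) := by
  simp only [l2norm_eq_norm_toLp hN, ← Finset.mul_sum]
  refine mul_le_mul_of_nonneg_left ?_ (Real.sqrt_nonneg _)
  have : WithLp.toLp 2 (fun j : idxs N => ∑ x ∈ s, F x j) =
      ∑ x ∈ s, WithLp.toLp 2 (fun j : idxs N => F x j) := by
    ext j
    simp
  rw [this]
  exact norm_sum_le _ _

lemma l2norm_const_mul {N : ℤ} (a : ℂ) (f : ℤ → ℂ) :
    l2norm N (fun j => a * f j) = ‖a‖ * l2norm N f := by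
  simp only [l2norm, norm_mul, mul_pow, ← Finset.mul_sum]
  rw [mul_left_comm, Real.sqrt_mul (sq_nonneg _), Real.sqrt_sq (norm_nonneg _)]

lemma l2norm_nonneg (N : ℤ) (f : ℤ → ℂ) : 0 ≤ l2norm N f := Real.sqrt_nonneg _

/-- Parseval's identity for the discrete Fourier transform. -/
lemma l2norm_idft {N : ℤ} (hN : 0 < N) (h2 : Even N) (c : ℤ → ℂ) :
    l2norm N (idft N c) = Real.sqrt (2 * Real.pi * ∑ k ∈ idxs N, ‖c k‖ ^ 2) := by
  have hN' : (N : ℝ) ≠ 0 := by exact_mod_cast hN.ne'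
  have key : ∑ j ∈ idxs N, ‖idft N c j‖ ^ 2 = N * ∑ k ∈ idxs N, ‖c k‖ ^ 2 := by
    have h : ∑ j ∈ idxs N, idft N c j * (starRingEnd ℂ) (idft N c j) =
        (N : ℂ) * ∑ k ∈ idxs N, c k * (starRingEnd ℂ) (c k) := by
      have e : ∀ j, idft N c j * (starRingEnd ℂ) (idft N c j) = ∑ k ∈ idxs N, ∑ l ∈ idxs N,
          c k * (starRingEnd ℂ) (c l) * gridExp N (k - l) j := by
        intro j
        simp only [idft_eq_sum_gridExp, map_sum, map_mul, conj_gridExp, Finset.sum_mul_sum]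
        refine Finset.sum_congr rfl fun k _ => Finset.sum_congr rfl fun l _ => ?_
        rw [sub_eq_add_neg, gridExp_add_left]
        ring
      simp only [e]
      rw [Finset.sum_comm, Finset.mul_sum]
      refine Finset.sum_congr rfl fun k hk => ?_
      rw [Finset.sum_comm]
      simp only [← Finset.mul_sum, sum_gridExp hN h2]
      rw [Finset.sum_eq_single_of_mem k hk]
      · simp only [sub_self, dvd_zero, if_true]
        ring
      · intro l hl hlk
        rw [if_neg fun h => hlk (eq_of_mem_idxs_of_dvd h2 hk hl h).symm, mul_zero]
    simp only [Complex.mul_conj, Complex.normSq_eq_norm_sq] at h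
    exact_mod_cast h
  rw [l2norm, key, hgrid]
  congr 1
  field_simp

lemma l2norm_eq_sqrt_dft {N : ℤ} (hN : 0 < N) (h2 : Even N) (φ : ℤ → ℂ) :
    l2norm N φ = Real.sqrt (2 * Real.pi * ∑ k ∈ idxs N, ‖dft N φ k‖ ^ 2) := by
  rw [← l2norm_idft hN h2]
  exact l2norm_congr fun j hj => by rw [idft_dft hN h2 φ hj]

lemma l2norm_multiplier_le {N : ℤ} (hN : 0 < N) (h2 : Even N) (φ w : ℤ → ℂ) {B : ℝ}
    (hB : 0 ≤ B) (hw : ∀ l ∈ idxs N, ‖w l‖ ≤ B) :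
    l2norm N (idft N fun l => w l * dft N φ l) ≤ B * l2norm N φ := by
  rw [l2norm_idft hN h2, l2norm_eq_sqrt_dft hN h2 φ]
  refine Real.sqrt_le_iff.2 ⟨by positivity, ?_⟩
  rw [mul_pow, Real.sq_sqrt (by positivity), mul_left_comm]
  refine mul_le_mul_of_nonneg_left ?_ (by positivity)
  rw [Finset.mul_sum]
  refine Finset.sum_le_sum fun l hl => ?_
  rw [norm_mul, mul_pow]
  gcongr
  exact hw l hl

/-- A sum of frequency shifts composed with Fourier multipliers is bounded on `l²`. -/
lemma l2norm_sum_shift_le {N : ℤ} (hN : 0 < N) (h2 : Even N) (φ a : ℤ → ℂ) (w : ℤ → ℤ → ℂ)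
    {B : ℤ → ℝ} (hB : ∀ n, 0 ≤ B n) (hw : ∀ n, ∀ l ∈ idxs N, ‖w n l‖ ≤ B n) :
    l2norm N (fun j => ∑ x ∈ idxs N ×ˢ idxs N,
      a x.1 * (w x.1 x.2 * dft N φ x.2) * gridExp N (x.1 + x.2) j) ≤
      (∑ n ∈ idxs N, ‖a n‖ * B n) * l2norm N φ := by
  have e : (fun j => ∑ x ∈ idxs N ×ˢ idxs N,
      a x.1 * (w x.1 x.2 * dft N φ x.2) * gridExp N (x.1 + x.2) j) =
      fun j => ∑ n ∈ idxs N, a n *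
        (gridExp N n j * idft N (fun l => w n l * dft N φ l) j) := by
    funext j
    rw [Finset.sum_product]
    refine Finset.sum_congr rfl fun n _ => ?_
    simp only [idft_eq_sum_gridExp, Finset.mul_sum, gridExp_add_left]
    refine Finset.sum_congr rfl fun l _ => ?_
    ring
  rw [e, Finset.sum_mul]
  refine (l2norm_sum_le hN _ _).trans (Finset.sum_le_sum fun n _ => ?_)
  rw [l2norm_const_mul, mul_assoc]
  refine mul_le_mul_of_nonneg_left ?_ (norm_nonneg _)
  refine le_trans (le_of_eq ?_) (l2norm_multiplier_le hN h2 φ (w n) (hB n) (hw n))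
  exact l2norm_congr fun j _ => by rw [norm_mul, norm_gridExp, one_mul]

/-- The Fourier symbol of the discrete Hilbert transform. -/
def hilbertSymbol (N q : ℤ) : ℂ :=
  ((hgrid N / Real.pi : ℝ) : ℂ) * ∑ j ∈ (idxs N).filter (fun j => Odd j),
    gridExp N q j * (Real.cot (-gridPt N j / 2) : ℂ)

lemma gridPt_add (N i j : ℤ) : gridPt N (i + j) = gridPt N i + gridPt N j := by
  simp only [gridPt]
  push_cast
  ring

lemma gridPt_self {N : ℤ} (hN : 0 < N) : gridPt N N = 2 * Real.pi := by
  have : (N : ℝ) ≠ 0 := by exact_mod_cast hN.ne'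
  simp only [gridPt, hgrid]
  field_simp

lemma Hh_gridExp {N : ℤ} (hN : 0 < N) (h2 : Even N) (q i : ℤ) :
    Hh N (gridExp N q) i = hilbertSymbol N q * gridExp N q i := by
  simp only [Hh, hilbertSymbol, mul_assoc, Finset.sum_filter]
  congr 1
  rw [← sum_idxs_shift hN h2 (F := fun j => if Odd (j - i) then
    gridExp N q j * (Real.cot ((gridPt N i - gridPt N j) / 2) : ℂ) else 0) ?_ i, Finset.sum_mul]
  · refine Finset.sum_congr rfl fun j _ => ?_
    simp only [add_sub_cancel_right, gridExp_add_right, gridPt_add, sub_add_cancel_right, ite_mul,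
      zero_mul]
    refine if_congr Iff.rfl ?_ rfl
    ring
  · intro j
    have hodd : Odd (j + N - i) ↔ Odd (j - i) := by
      rw [add_sub_right_comm, Int.odd_add]
      exact iff_true_right h2
    have hcot : Real.cot ((gridPt N i - gridPt N (j + N)) / 2) =
        Real.cot ((gridPt N i - gridPt N j) / 2) := by
      have : (gridPt N i - gridPt N (j + N)) / 2 =
          (gridPt N i - gridPt N j) / 2 - Real.pi := by
        rw [gridPt_add, gridPt_self hN]
        ring
      rw [this, Real.cot_eq_cos_div_sin, Real.cot_eq_cos_div_sin, Real.cos_sub_pi,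
        Real.sin_sub_pi, neg_div_neg_eq]
    simp only [hodd, hcot, gridExp_periodic hN q j]

lemma sum_odd_gridExp_eq_zero {N : ℤ} (hN : 0 < N) (h2 : Even N) {q : ℤ} (hq : ¬ N / 2 ∣ q) :
    ∑ j ∈ (idxs N).filter (fun j => Odd j), gridExp N q j = 0 := by
  rw [Finset.sum_filter]
  have hF : Function.Periodic (fun j : ℤ => if Odd j then gridExp N q j else 0) N := by
    intro j
    have hodd : Odd (j + N) ↔ Odd j := by
      rw [Int.odd_add]
      exact iff_true_right h2
    simp only [hodd, gridExp_periodic hN q j]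
  have h1 := sum_idxs_shift hN h2 hF 2
  have hodd : ∀ j : ℤ, Odd (j + 2) ↔ Odd j := fun j => by
    rw [Int.odd_add]
    exact iff_true_right even_two
  have e : ∀ j : ℤ, (if Odd (j + 2) then gridExp N q (j + 2) else 0) =
      (if Odd j then gridExp N q j else 0) * gridExp N q 2 := fun j => by
    simp only [hodd, gridExp_add_right, ite_mul, zero_mul]
  simp only [e, ← Finset.sum_mul] at h1
  have h3 : gridExp N q 2 ≠ 1 := by
    rw [Ne, gridExp_eq_one_iff hN]
    obtain ⟨M, rfl⟩ := h2
    rintro ⟨t, ht⟩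
    refine hq ⟨t, ?_⟩
    have hd : (M + M) / 2 = M := by omega
    rw [hd]
    linarith
  by_contra hS
  exact h3 (mul_left_cancel₀ hS (by rw [h1, mul_one]))

lemma norm_sum_odd_gridExp_le {N : ℤ} (hN : 0 < N) (h2 : Even N) (q : ℤ) :
    ‖∑ j ∈ (idxs N).filter (fun j => Odd j), gridExp N q j‖ ≤ N := by
  refine (norm_sum_le _ _).trans ?_
  simp only [norm_gridExp, Finset.sum_const, nsmul_eq_mul, mul_one]
  rw [← card_idxs hN h2]
  exact_mod_cast Finset.card_filter_le _ _

lemma exp_sub_one_mul_cot {y : ℝ} (hy : Real.sin y ≠ 0) :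
    (Complex.exp (2 * y * Complex.I) - 1) * (Real.cot (-y) : ℂ) =
      -Complex.I * (Complex.exp (2 * y * Complex.I) + 1) := by
  have hs : Complex.sin y ≠ 0 := by exact_mod_cast hy
  have h1 : Complex.exp (2 * y * Complex.I) =
      (Complex.cos y + Complex.sin y * Complex.I) ^ 2 := by
    rw [← Complex.exp_mul_I, ← Complex.exp_nat_mul]
    push_cast
    ring_nf
  have h2 := Complex.sin_sq_add_cos_sq (y : ℂ)
  rw [h1, Real.cot_eq_cos_div_sin, Real.cos_neg, Real.sin_neg]
  push_cast
  field_simp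
  have hI := Complex.I_sq
  set c := Complex.cos y
  set s := Complex.sin y
  linear_combination (-c - Complex.I * s) * h2 + (c + Complex.I * s) * s ^ 2 * hI

lemma hilbertSymbol_succ_sub {N : ℤ} (hN : 0 < N) (h2 : Even N) (q : ℤ) :
    hilbertSymbol N (q + 1) - hilbertSymbol N q =
      ((hgrid N / Real.pi : ℝ) : ℂ) * (-Complex.I *
        (∑ j ∈ (idxs N).filter (fun j => Odd j), gridExp N (q + 1) j +
          ∑ j ∈ (idxs N).filter (fun j => Odd j), gridExp N q j)) := by
  rw [hilbertSymbol, hilbertSymbol, ← mul_sub, ← Finset.sum_sub_distrib, ← Finset.sum_add_distrib]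
  congr 1
  rw [Finset.mul_sum]
  refine Finset.sum_congr rfl fun j hj => ?_
  have hodd : Odd j := (Finset.mem_filter.1 hj).2
  have hN' : (N : ℝ) ≠ 0 := by exact_mod_cast hN.ne'
  have hsin : Real.sin (gridPt N j / 2) ≠ 0 := by
    rw [Ne, Real.sin_eq_zero_iff]
    rintro ⟨n, hn⟩
    have h3 : (n * N : ℝ) = j := by
      have hpi := Real.pi_ne_zero
      simp only [gridPt, hgrid] at hn
      field_simp at hn
      linarith
    have h4 : j = n * N := by exact_mod_cast h3.symm
    rw [h4] at hodd
    exact Int.not_even_iff_odd.2 hodd (h2.mul_left n)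
  have key := exp_sub_one_mul_cot hsin
  have he : Complex.exp (2 * ((gridPt N j / 2 : ℝ) : ℂ) * Complex.I) = gridExp N 1 j := by
    rw [gridExp]
    push_cast
    ring_nf
  rw [he] at key
  rw [gridExp_add_left, neg_div]
  linear_combination gridExp N q j * key

lemma hilbertSymbol_succ_eq {N : ℤ} (hN : 0 < N) (h2 : Even N) {q : ℤ} (hq : ¬ N / 2 ∣ q)
    (hq' : ¬ N / 2 ∣ q + 1) : hilbertSymbol N (q + 1) = hilbertSymbol N q := by
  rw [← sub_eq_zero, hilbertSymbol_succ_sub hN h2, sum_odd_gridExp_eq_zero hN h2 hq,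
    sum_odd_gridExp_eq_zero hN h2 hq']
  simp

lemma norm_hilbertSymbol_succ_sub_le {N : ℤ} (hN : 0 < N) (h2 : Even N) (q : ℤ) :
    ‖hilbertSymbol N (q + 1) - hilbertSymbol N q‖ ≤ 4 := by
  have hN' : (0 : ℝ) < N := by exact_mod_cast hN
  have hh : hgrid N / Real.pi = 2 / N := by
    rw [hgrid]
    field_simp
  rw [hilbertSymbol_succ_sub hN h2, hh, norm_mul, norm_mul, Complex.norm_real, norm_neg,
    Complex.norm_I, one_mul, Real.norm_of_nonneg (by positivity)]
  calc 2 / (N : ℝ) * _ ≤ 2 / (N : ℝ) * (N + N) := by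
        refine mul_le_mul_of_nonneg_left ((norm_add_le _ _).trans (add_le_add ?_ ?_))
          (by positivity)
        · exact norm_sum_odd_gridExp_le hN h2 _
        · exact norm_sum_odd_gridExp_le hN h2 _
    _ = 4 := by
        field_simp
        norm_num

/-- A sequence that only jumps next to multiples of `M` either agrees at
the two ends of an interval, or the interval contains a multiple of `M`. -/
lemma eq_or_exists_dvd_of_jumps {σ : ℤ → ℂ} {M : ℤ}
    (hσ : ∀ q, ¬ M ∣ q → ¬ M ∣ q + 1 → σ (q + 1) = σ q) (l : ℤ) (n : ℕ) :
    σ (l + n) = σ l ∨ ∃ q, M ∣ q ∧ l ≤ q ∧ q ≤ l + n := by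
  induction n with
  | zero => simp
  | succ n ih =>
    by_cases h : ∃ q, M ∣ q ∧ l ≤ q ∧ q ≤ l + (n + 1 : ℕ)
    · exact Or.inr h
    · push Not at h
      have h0 := h (l + n)
      have h1 := h (l + n + 1)
      push_cast at h0 h1 h
      rcases ih with ih | ⟨q, hq, hlq, hqn⟩
      · left
        push_cast
        rw [← add_assoc, hσ (l + n) (fun hd => by have := h0 hd; omega)
          (fun hd => by have := h1 hd; omega), ih]
      · have := h q hq hlq
        omega

lemma norm_sub_le_of_jumps {σ : ℤ → ℂ} {C : ℝ} (hσ : ∀ q, ‖σ (q + 1) - σ q‖ ≤ C) (l : ℤ)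
    (n : ℕ) : ‖σ (l + n) - σ l‖ ≤ C * n := by
  induction n with
  | zero => simp
  | succ n ih =>
    have h := norm_add_le (σ (l + n + 1) - σ (l + n)) (σ (l + n) - σ l)
    rw [sub_add_sub_cancel] at h
    push_cast
    rw [← add_assoc]
    linarith [hσ (l + n)]

lemma hilbertSymbol_shift {N : ℤ} (hN : 0 < N) (h2 : Even N) (l n : ℤ) :
    ‖hilbertSymbol N (n + l) - hilbertSymbol N l‖ ≤ 4 * |(n : ℝ)| ∧
      (hilbertSymbol N (n + l) = hilbertSymbol N l ∨
        ∃ q, N / 2 ∣ q ∧ |l - q| ≤ |n| ∧ |n + l - q| ≤ |n|) := by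
  have hle := norm_sub_le_of_jumps (norm_hilbertSymbol_succ_sub_le hN h2)
  have hex := eq_or_exists_dvd_of_jumps fun q h h' => hilbertSymbol_succ_eq hN h2 (q := q) h h'
  obtain ⟨m, rfl | rfl⟩ := n.eq_nat_or_neg
  · rw [add_comm]
    refine ⟨by simpa using hle l m, (hex l m).imp id ?_⟩
    rintro ⟨q, hq, h1, h3⟩
    refine ⟨q, hq, ?_, ?_⟩ <;> rw [Nat.abs_cast, abs_le] <;> omega
  · have hl := hle (-m + l) m
    have he := hex (-m + l) m
    rw [neg_add_cancel_comm] at hl he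
    refine ⟨by rw [norm_sub_rev]; simpa using hl, he.imp Eq.symm ?_⟩
    rintro ⟨q, hq, h1, h3⟩
    refine ⟨q, hq, ?_, ?_⟩ <;> rw [abs_neg, Nat.abs_cast, abs_le] <;> omega

lemma abs_le_or_of_near_multiple {N : ℤ} (h2 : Even N) {k q n : ℤ} (hk : k ∈ idxs N)
    (hq : N / 2 ∣ q) (h : |k - q| ≤ n) : |k| ≤ n ∨ N / 2 - |k| ≤ n := by
  obtain ⟨M, rfl⟩ := h2
  have hd : (M + M) / 2 = M := by omega
  simp only [idxs, Finset.mem_Icc] at hk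
  rw [hd] at hk hq ⊢
  obtain ⟨t, rfl⟩ := hq
  rw [abs_le] at h
  rcases lt_trichotomy t 0 with ht | rfl | ht
  · right
    have : M * t ≤ -M := by nlinarith
    have := neg_le_abs k
    omega
  · left
    rw [abs_le]
    simpa using h
  · right
    have : M ≤ M * t := by nlinarith
    have := le_abs_self k
    omega

/-- Fourier representation of the commutator on the grid. -/
lemma commHh_idft {N : ℤ} (hN : 0 < N) (h2 : Even N) {g : ℝ → ℂ} {a : ℤ → ℂ}
    (ha : ∀ j, g (gridPt N j) = idft N a j) (c : ℤ → ℂ) :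
    commHh N g (idft N c) = fun i => ∑ x ∈ idxs N ×ˢ idxs N,
      a x.1 * c x.2 * (hilbertSymbol N (x.1 + x.2) - hilbertSymbol N x.2) *
        gridExp N (x.1 + x.2) i := by
  have Hsum : ∀ (s : Finset (ℤ × ℤ)) (b : ℤ × ℤ → ℂ) (Q : ℤ × ℤ → ℤ) (i : ℤ),
      Hh N (fun j => ∑ x ∈ s, b x * gridExp N (Q x) j) i =
        ∑ x ∈ s, b x * (hilbertSymbol N (Q x) * gridExp N (Q x) i) := by
    intro s b Q i
    simp only [← Hh_gridExp hN h2, Hh, Finset.sum_mul, Finset.mul_sum]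
    rw [Finset.sum_comm]
    refine Finset.sum_congr rfl fun x _ => Finset.sum_congr rfl fun j _ => ?_
    ring
  have Hidft : ∀ i, Hh N (idft N c) i =
      ∑ l ∈ idxs N, c l * (hilbertSymbol N l * gridExp N l i) := by
    intro i
    simp only [← Hh_gridExp hN h2, Hh, idft_eq_sum_gridExp, Finset.sum_mul, Finset.mul_sum]
    rw [Finset.sum_comm]
    refine Finset.sum_congr rfl fun x _ => Finset.sum_congr rfl fun j _ => ?_
    ring
  have hprod : (fun j => g (gridPt N j) * idft N c j) = fun j => ∑ x ∈ idxs N ×ˢ idxs N,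
      a x.1 * c x.2 * gridExp N (x.1 + x.2) j := by
    funext j
    rw [ha, idft_eq_sum_gridExp, idft_eq_sum_gridExp, Finset.sum_mul_sum, Finset.sum_product]
    refine Finset.sum_congr rfl fun n _ => Finset.sum_congr rfl fun l _ => ?_
    rw [gridExp_add_left]
    ring
  funext i
  rw [commHh, hprod, Hsum, Hidft, ha, idft_eq_sum_gridExp, Finset.sum_mul_sum,
    ← Finset.sum_product', ← Finset.sum_sub_distrib]
  refine Finset.sum_congr rfl fun x _ => ?_
  simp only [gridExp_add_left]
  ring

lemma Dh_iterate_sum {ι : Type*} {N : ℤ} (hN : 0 < N) (h2 : Even N) (ρ : ℝ → ℝ) (s : Finset ι)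
    (a : ι → ℂ) (Q : ι → ℤ) (p : ℕ) :
    (Dh N ρ)^[p] (fun j => ∑ x ∈ s, a x * gridExp N (Q x) j) = fun j => ∑ x ∈ s,
      a x * (Complex.I * (idxRep N (Q x) : ℂ) * (ρ (gridPt N (idxRep N (Q x))) : ℂ)) ^ p *
        gridExp N (Q x) j := by
  induction p with
  | zero => simp
  | succ p ih =>
    rw [Function.iterate_succ_apply', ih, Dh, idft_mul_dft_sum hN h2
      (fun k => Complex.I * (k : ℂ) * (ρ (gridPt N k) : ℂ))]
    funext j
    refine Finset.sum_congr rfl fun x _ => ?_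
    rw [pow_succ]
    ring

lemma dft_Sh_iterate {N : ℤ} (hN : 0 < N) (h2 : Even N) (φ : ℤ → ℂ) (p : ℕ) {k : ℤ}
    (hk : k ∈ idxs N) :
    dft N ((Sh N)^[p] φ) k = (if k = N / 2 then 0 else Complex.I * (k : ℂ)) ^ p * dft N φ k := by
  induction p with
  | zero => simp
  | succ p ih =>
    rw [Function.iterate_succ_apply', Sh, dft_idft hN h2 _ hk, ih, pow_succ]
    split_ifs <;> ring

/-- A filter vanishes quadratically at `±π`. -/
lemma IsFilter.exists_quadratic_bound {ρ : ℝ → ℝ} (hρ : IsFilter ρ) :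
    ∃ C : ℝ, 1 ≤ C ∧ ∀ x : ℝ, |x| ≤ Real.pi →
      |ρ x| ≤ C ∧ |ρ x| ≤ C * (Real.pi - |x|) ^ 2 := by
  obtain ⟨r, hr, hsm⟩ := hρ.smooth
  have h2 : ContDiff ℝ 2 ρ := hsm.of_le (by exact_mod_cast hr.le)
  have h1 : ContDiff ℝ 1 (deriv ρ) := by
    have := (contDiff_succ_iff_deriv (n := 1) (f := ρ)).1 (by simpa [one_add_one_eq_two] using h2)
    exact this.2.2
  have hc2 : Continuous (deriv (deriv ρ)) := h1.continuous_deriv le_rfl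
  obtain ⟨A, hA⟩ := (isCompact_Icc (a := -Real.pi) (b := Real.pi)).exists_bound_of_continuousOn
    h2.continuous.continuousOn
  obtain ⟨B, hB⟩ := (isCompact_Icc (a := -Real.pi) (b := Real.pi)).exists_bound_of_continuousOn
    hc2.continuousOn
  have hpi := Real.pi_pos
  have key : ∀ x : ℝ, 0 ≤ x → x ≤ Real.pi → |ρ x| ≤ B * (Real.pi - x) ^ 2 := by
    intro x hx0 hx
    have hd : ∀ y ∈ Set.Icc x Real.pi, ‖deriv ρ y‖ ≤ B * (Real.pi - x) := by
      intro y hy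
      have := (convex_Icc x Real.pi).norm_image_sub_le_of_norm_deriv_le
        (f := deriv ρ) (C := B) (x := Real.pi) (y := y)
        (fun z _ => (h1.differentiable (by norm_num)).differentiableAt)
        (fun z hz => hB z ⟨by linarith [hz.1], hz.2⟩) ⟨hx, le_rfl⟩ hy
      rw [hρ.deriv_zero_at_pi, sub_zero, Real.norm_eq_abs (y - _), abs_sub_comm,
        abs_of_nonneg (by linarith [hy.2])] at this
      have hB0 : 0 ≤ B := (norm_nonneg _).trans (hB 0 ⟨by linarith, hpi.le⟩)
      exact this.trans (mul_le_mul_of_nonneg_left (by linarith [hy.1]) hB0)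
    have := (convex_Icc x Real.pi).norm_image_sub_le_of_norm_deriv_le
        (f := ρ) (x := Real.pi) (y := x)
        (fun z _ => (h2.differentiable (by norm_num)).differentiableAt)
        hd ⟨hx, le_rfl⟩ ⟨le_rfl, hx⟩
    rw [hρ.zero_at_pi, sub_zero, Real.norm_eq_abs, Real.norm_eq_abs, abs_sub_comm,
      abs_of_nonneg (by linarith : 0 ≤ Real.pi - x)] at this
    linarith [this]
  refine ⟨max 1 (max A B), le_max_left _ _, fun x hx => ⟨?_, ?_⟩⟩
  · exact (hA x (abs_le.1 hx)).trans ((le_max_left _ _).trans (le_max_right _ _))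
  · have hab : ρ |x| = ρ x := by
      rcases abs_choice x with h | h <;> rw [h]
      exact hρ.even x
    rw [← hab]
    refine (key |x| (abs_nonneg x) hx).trans ?_
    gcongr
    exact (le_max_right _ _).trans (le_max_right _ _)

lemma abs_gridPt_of_mem {N : ℤ} (hN : 0 < N) (h2 : Even N) {k : ℤ} (hk : k ∈ idxs N) :
    |gridPt N k| ≤ Real.pi ∧
      Real.pi - |gridPt N k| = hgrid N * (((N / 2 : ℤ) : ℝ) - |(k : ℝ)|) ∧
      |(k : ℝ)| ≤ ((N / 2 : ℤ) : ℝ) ∧ hgrid N * ((N / 2 : ℤ) : ℝ) = Real.pi := by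
  have hh := hgrid_pos hN
  have hN' : (0 : ℝ) < N := by exact_mod_cast hN
  have hhalf : hgrid N * ((N / 2 : ℤ) : ℝ) = Real.pi := by
    obtain ⟨M, rfl⟩ := h2
    have hd : (M + M) / 2 = M := by omega
    rw [hd, hgrid]
    push_cast at hN' ⊢
    have hM : (M : ℝ) ≠ 0 := by linarith
    field_simp
    ring
  have hk' : |(k : ℝ)| ≤ ((N / 2 : ℤ) : ℝ) := by
    have : |k| ≤ N / 2 := by
      simp only [idxs, Finset.mem_Icc] at hk
      rw [abs_le]
      omega
    exact_mod_cast this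
  have habs : |gridPt N k| = hgrid N * |(k : ℝ)| := by
    rw [gridPt, abs_mul, abs_of_pos hh, mul_comm]
  refine ⟨?_, ?_, hk', hhalf⟩
  · rw [habs, ← hhalf]
    exact mul_le_mul_of_nonneg_left hk' hh.le
  · rw [habs, mul_sub, hhalf]

/-- Frequencies close to `0` or to `±N/2` are damped by the filter. -/
lemma IsFilter.exists_weight_bound {ρ : ℝ → ℝ} (hρ : IsFilter ρ) :
    ∃ C : ℝ, 1 ≤ C ∧ ∀ N : ℤ, 0 < N → Even N → ∀ k ∈ idxs N, |ρ (gridPt N k)| ≤ C ∧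
      ∀ n : ℤ, (|k| ≤ n ∨ N / 2 - |k| ≤ n) → ∀ p : ℕ, p ≤ 2 →
        |(k : ℝ)| ^ p * |ρ (gridPt N k)| ≤ C * (1 + (n : ℝ) ^ 2) := by
  obtain ⟨C, hC, hb⟩ := hρ.exists_quadratic_bound
  have hC0 : 0 ≤ C := by linarith
  have hpi : 1 ≤ Real.pi ^ 2 := by nlinarith [Real.pi_gt_three]
  refine ⟨C * Real.pi ^ 2, by nlinarith, fun N hN h2 k hk => ?_⟩
  obtain ⟨hx, hsub, hkN, hhalf⟩ := abs_gridPt_of_mem hN h2 hk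
  obtain ⟨hb1, hb2⟩ := hb _ hx
  have hCp : C ≤ C * Real.pi ^ 2 := le_mul_of_one_le_right hC0 hpi
  refine ⟨hb1.trans hCp, fun n hn p hp => ?_⟩
  have hpow : ∀ y : ℝ, |(k : ℝ)| ≤ y → |(k : ℝ)| ^ p ≤ 1 + y ^ 2 := by
    intro y hy
    have h0 := abs_nonneg (k : ℝ)
    interval_cases p
    · rw [pow_zero]
      nlinarith
    · rw [pow_one]
      nlinarith [sq_nonneg (y - 1)]
    · nlinarith
  rcases hn with hn | hn
  · have hn' : |(k : ℝ)| ≤ n := by exact_mod_cast hn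
    calc |(k : ℝ)| ^ p * |ρ (gridPt N k)| ≤ (1 + (n : ℝ) ^ 2) * (C * Real.pi ^ 2) :=
          mul_le_mul (hpow n hn') (hb1.trans hCp) (abs_nonneg _) (by positivity)
      _ = _ := mul_comm _ _
  · have hn' : ((N / 2 : ℤ) : ℝ) - |(k : ℝ)| ≤ n := by exact_mod_cast hn
    have hd0 : 0 ≤ ((N / 2 : ℤ) : ℝ) - |(k : ℝ)| := by linarith
    rw [hsub] at hb2
    have hsq : |(k : ℝ)| ^ 2 * |ρ (gridPt N k)| ≤ C * Real.pi ^ 2 * (n : ℝ) ^ 2 := by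
      calc |(k : ℝ)| ^ 2 * |ρ (gridPt N k)|
          ≤ ((N / 2 : ℤ) : ℝ) ^ 2 *
            (C * (hgrid N * (((N / 2 : ℤ) : ℝ) - |(k : ℝ)|)) ^ 2) := by gcongr
        _ = C * (hgrid N * ((N / 2 : ℤ) : ℝ)) ^ 2 * (((N / 2 : ℤ) : ℝ) - |(k : ℝ)|) ^ 2 := by ring
        _ ≤ C * Real.pi ^ 2 * (n : ℝ) ^ 2 := by
          rw [hhalf]
          gcongr
    have hle : |(k : ℝ)| ^ p ≤ 1 + |(k : ℝ)| ^ 2 := hpow _ le_rfl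
    calc |(k : ℝ)| ^ p * |ρ (gridPt N k)| ≤ (1 + |(k : ℝ)| ^ 2) * |ρ (gridPt N k)| :=
          mul_le_mul_of_nonneg_right hle (abs_nonneg _)
      _ ≤ C * Real.pi ^ 2 * (1 + (n : ℝ) ^ 2) := by linarith

lemma norm_fwdDiff_iterate_le {h : ℝ} (hh : 0 ≤ h) (p : ℕ) :
    ∀ {f : ℝ → ℂ} {K : ℝ}, ContDiff ℝ p f → (∀ x, ‖iteratedDeriv p f x‖ ≤ K) →
      ∀ x, ‖(fwdDiff h)^[p] f x‖ ≤ K * h ^ p := by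
  induction p with
  | zero =>
    intro f K _ hK x
    simpa using hK x
  | succ p ih =>
    intro f K hf hK x
    have hfp : ContDiff ℝ p f := hf.of_le (by exact_mod_cast p.le_succ)
    have hfs : ContDiff ℝ p fun y => f (y + h) := hfp.comp (contDiff_id.add contDiff_const)
    have hdiff : ContDiff ℝ p (fwdDiff h f) := hfs.sub hfp
    rw [Function.iterate_succ_apply, pow_succ', ← mul_assoc]
    refine ih hdiff (fun y => ?_) x
    have e : iteratedDeriv p (fwdDiff h f) y =
        iteratedDeriv p f (y + h) - iteratedDeriv p f y := by
      have : fwdDiff h f = (fun y => f (y + h)) - f := rfl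
      rw [this, iteratedDeriv_sub hfs.contDiffAt hfp.contDiffAt, iteratedDeriv_comp_add_const]
    rw [e]
    have := convex_univ.norm_image_sub_le_of_norm_deriv_le (𝕜 := ℝ)
      (f := iteratedDeriv p f) (C := K) (x := y) (y := y + h)
      (fun z _ => (hf.differentiable_iteratedDeriv p (by exact_mod_cast p.lt_succ_self)) z)
      (fun z _ => by rw [← iteratedDeriv_succ]; exact hK z) (Set.mem_univ _) (Set.mem_univ _)
    rwa [add_sub_cancel_left, Real.norm_of_nonneg hh] at this

lemma periodic_iteratedDeriv {g : ℝ → ℂ} {c : ℝ} (hg : Function.Periodic g c) (p : ℕ) :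
    Function.Periodic (iteratedDeriv p g) c := by
  intro x
  have : (fun y => g (y + c)) = g := funext hg
  rw [← congrFun (iteratedDeriv_comp_add_const p g c) x, this]

lemma periodic_samples {N : ℤ} (hN : 0 < N) {g : ℝ → ℂ}
    (hg : Function.Periodic g (2 * Real.pi)) :
    Function.Periodic (fun j => g (gridPt N j)) N := by
  intro j
  simp only [gridPt_add, gridPt_self hN]
  exact hg _

lemma norm_dft_le {N : ℤ} (hN : 0 < N) (h2 : Even N) {f : ℤ → ℂ} {K : ℝ} (hK : ∀ j, ‖f j‖ ≤ K)
    (k : ℤ) : ‖dft N f k‖ ≤ K := by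
  have hN' : (0 : ℝ) < N := by exact_mod_cast hN
  rw [dft, norm_mul, norm_inv, Complex.norm_intCast, abs_of_pos hN', inv_mul_le_iff₀ hN',
    ← card_idxs hN h2, ← nsmul_eq_mul]
  refine (norm_sum_le _ _).trans (Finset.sum_le_card_nsmul _ _ _ fun j _ => ?_)
  rw [exp_neg_eq_gridExp, norm_mul, norm_gridExp, mul_one]
  exact hK j

lemma dft_fwdDiff_iterate {N : ℤ} (hN : 0 < N) (h2 : Even N) (m : ℤ) (p : ℕ) {g : ℝ → ℂ}
    (hg : Function.Periodic g (2 * Real.pi)) :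
    dft N (fun j => (fwdDiff (hgrid N))^[p] g (gridPt N j)) m =
      (gridExp N m 1 - 1) ^ p * dft N (fun j => g (gridPt N j)) m := by
  induction p generalizing g with
  | zero => simp
  | succ p ih =>
    have hper : Function.Periodic (fwdDiff (hgrid N) g) (2 * Real.pi) := fun x => by
      simp only [fwdDiff, hg x, add_right_comm x, hg (x + hgrid N)]
    rw [Function.iterate_succ_apply, ih hper, pow_succ, mul_assoc]
    congr 1
    have hone : gridPt N 1 = hgrid N := by simp [gridPt]
    have hF : Function.Periodic (fun j => g (gridPt N j) * gridExp N (-m) j) N :=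
      (periodic_samples hN hg).mul (gridExp_periodic hN (-m))
    have hs := sum_idxs_shift_one hN h2 hF
    have hinv : gridExp N m 1 * gridExp N (-m) 1 = 1 := by
      rw [← gridExp_add_left, add_neg_cancel, gridExp_eq_one_iff hN]
      simp
    simp only [dft, exp_neg_eq_gridExp, fwdDiff, sub_mul, Finset.sum_sub_distrib, one_mul]
    have e : ∑ j ∈ idxs N, g (gridPt N j + hgrid N) * gridExp N (-m) j =
        gridExp N m 1 * ∑ j ∈ idxs N, g (gridPt N j) * gridExp N (-m) j := by
      rw [← hs, Finset.mul_sum]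
      refine Finset.sum_congr rfl fun j _ => ?_
      rw [gridPt_add, hone, gridExp_add_right]
      linear_combination (-(g (gridPt N j + hgrid N) * gridExp N (-m) j)) * hinv
    rw [e]
    ring

lemma le_norm_gridExp_sub_one {N : ℤ} (hN : 0 < N) (h2 : Even N) {m : ℤ} (hm : m ∈ idxs N) :
    2 / Real.pi * (hgrid N * |(m : ℝ)|) ≤ ‖gridExp N m 1 - 1‖ := by
  obtain ⟨hx, -, -, -⟩ := abs_gridPt_of_mem hN h2 hm
  have e : gridExp N m 1 = Complex.exp (Complex.I * (gridPt N m : ℝ)) := by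
    rw [gridExp_comm, gridExp]
    simp
  have habs : hgrid N * |(m : ℝ)| = |gridPt N m| := by
    rw [gridPt, abs_mul, abs_of_pos (hgrid_pos hN), mul_comm]
  rw [e, Complex.norm_exp_I_mul_ofReal_sub_one, habs, norm_mul, Real.norm_two, Real.norm_eq_abs]
  have := Real.mul_abs_le_abs_sin (x := gridPt N m / 2)
    (by rw [abs_div, abs_two]; linarith)
  rw [abs_div, abs_two] at this
  linarith

/-- The discrete Fourier coefficients of the samples of a `C^p` function decay like `|m|^{-p}`,
uniformly in the number of grid points. -/
lemma exists_dft_samples_decay {g : ℝ → ℂ} (hper : Function.Periodic g (2 * Real.pi)) {p : ℕ}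
    (hg : ContDiff ℝ p g) :
    ∃ K : ℝ, 0 < K ∧ ∀ N : ℤ, 0 < N → Even N → ∀ m ∈ idxs N,
      ‖dft N (fun j => g (gridPt N j)) m‖ * |(m : ℝ)| ^ p ≤ K := by
  have hc : Continuous (iteratedDeriv p g) := hg.continuous_iteratedDeriv p le_rfl
  obtain ⟨K, hK⟩ := (isCompact_Icc (a := 0) (b := 0 + 2 * Real.pi)).exists_bound_of_continuousOn
    hc.continuousOn
  have hKall : ∀ x, ‖iteratedDeriv p g x‖ ≤ |K| + 1 := by
    intro x
    obtain ⟨y, hy, hxy⟩ := (periodic_iteratedDeriv hper p).exists_mem_Ico Real.two_pi_pos x 0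
    rw [hxy]
    linarith [hK y (Set.Ico_subset_Icc_self hy), le_abs_self K]
  have hpi := Real.pi_pos
  refine ⟨(|K| + 1) * (Real.pi / 2) ^ p, by positivity, fun N hN h2 m hm => ?_⟩
  have hh := hgrid_pos hN
  have h1 : ‖gridExp N m 1 - 1‖ ^ p * ‖dft N (fun j => g (gridPt N j)) m‖ ≤
      (|K| + 1) * hgrid N ^ p := by
    rw [← norm_pow, ← norm_mul, ← dft_fwdDiff_iterate hN h2 m p hper]
    exact norm_dft_le hN h2 (fun j => norm_fwdDiff_iterate_le hh.le p hg hKall _) m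
  have h3 : (2 / Real.pi * (hgrid N * |(m : ℝ)|)) ^ p ≤ ‖gridExp N m 1 - 1‖ ^ p :=
    pow_le_pow_left₀ (by positivity) (le_norm_gridExp_sub_one hN h2 hm) p
  have h4 := (mul_le_mul_of_nonneg_right h3
    (norm_nonneg (dft N (fun j => g (gridPt N j)) m))).trans h1
  have h5 : (2 / Real.pi) ^ p * (Real.pi / 2) ^ p = 1 := by
    rw [← mul_pow]
    field_simp
    exact one_pow p
  refine le_of_mul_le_mul_left ?_ (show 0 < (2 / Real.pi * hgrid N) ^ p by positivity)
  calc _ = (2 / Real.pi * (hgrid N * |(m : ℝ)|)) ^ p * ‖dft N (fun j => g (gridPt N j)) m‖ := by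
        rw [mul_pow, mul_pow, mul_pow]
        ring
    _ ≤ (|K| + 1) * hgrid N ^ p := h4
    _ = _ := by
        rw [mul_pow]
        linear_combination (-(|K| + 1) * hgrid N ^ p) * h5

lemma sum_coeff_mul_weight_le {s : Finset ℤ} {a : ℤ → ℂ} {A K : ℝ} (hA : 0 ≤ A) (hK : 0 ≤ K)
    (ha : ∀ m ∈ s, ‖a m‖ * |(m : ℝ)| ^ 5 ≤ K) :
    ∑ n ∈ s, ‖a n‖ * (4 * |(n : ℝ)| * (A * (1 + (n : ℝ) ^ 2))) ≤
      8 * A * K * ∑' n : ℤ, 1 / (n : ℝ) ^ 2 := by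
  have hS : Summable fun n : ℤ => 1 / (n : ℝ) ^ 2 :=
    Real.summable_one_div_int_pow.2 (by norm_num)
  refine le_trans ?_ (mul_le_mul_of_nonneg_left
    (hS.sum_le_tsum s fun n _ => by positivity) (by positivity))
  rw [Finset.mul_sum]
  refine Finset.sum_le_sum fun n hn => ?_
  rcases eq_or_ne n 0 with rfl | h0
  · simp
  · have h1 : (1 : ℝ) ≤ |(n : ℝ)| := by exact_mod_cast Int.one_le_abs h0
    have h3 : 0 < (n : ℝ) ^ 2 := by positivity
    rw [mul_one_div, le_div_iff₀ h3]
    have h4 : 1 + (n : ℝ) ^ 2 ≤ 2 * |(n : ℝ)| ^ 2 := by nlinarith [sq_abs (n : ℝ)]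
    calc ‖a n‖ * (4 * |(n : ℝ)| * (A * (1 + (n : ℝ) ^ 2))) * (n : ℝ) ^ 2
        ≤ ‖a n‖ * (4 * |(n : ℝ)| * (A * (2 * |(n : ℝ)| ^ 2))) * |(n : ℝ)| ^ 2 := by
          rw [sq_abs (n : ℝ)] at h4 ⊢
          gcongr
      _ = 8 * A * (‖a n‖ * |(n : ℝ)| ^ 5) := by ring
      _ ≤ 8 * A * K := mul_le_mul_of_nonneg_left (ha n hn) (by positivity)

lemma abs_pow_mul_le_of_le {x y C n : ℝ} {p : ℕ} (hC : 1 ≤ C) (hp : p ≤ 2)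
    (hy : |y| ≤ C) (h : |x| ^ p * |y| ≤ C * (1 + n ^ 2)) :
    (|x| * |y|) ^ p ≤ C ^ 2 * (1 + n ^ 2) := by
  have hn : 1 ≤ 1 + n ^ 2 := by nlinarith [sq_nonneg n]
  have hCC : C ≤ C ^ 2 := le_self_pow₀ hC (by norm_num)
  have h0 := abs_nonneg y
  interval_cases p
  · rw [pow_zero]
    nlinarith
  · rw [pow_one] at h ⊢
    nlinarith
  · calc (|x| * |y|) ^ 2 = |x| ^ 2 * |y| * |y| := by ring
      _ ≤ C * (1 + n ^ 2) * C := mul_le_mul h hy h0 (by positivity)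
      _ = C ^ 2 * (1 + n ^ 2) := by ring

/-- Lemma 8.4: the commutator `[H_h, g]` applied to a filtered
function is a second-order smoothing operator `A_{-2}`. -/
theorem hilbert_commutator_smoothing (g : ℝ → ℂ)
    (hper : Function.Periodic g (2 * Real.pi)) (hg : ContDiff ℝ 5 g)
    (ρ : ℝ → ℝ) (hρ : IsFilter ρ) :
    ∃ c : ℝ, 0 < c ∧ ∀ N : ℤ, 2 ≤ N → Even N → ∀ φ : ℤ → ℂ, ∀ k : ℕ, k ≤ 2 →
      l2norm N ((Dh N ρ)^[k] (commHh N g (filterP N ρ φ))) ≤ c * l2norm N φ ∧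
      l2norm N (commHh N g (filterP N ρ ((Sh N)^[k] φ))) ≤ c * l2norm N φ := by
  obtain ⟨C, hC, hw⟩ := hρ.exists_weight_bound
  obtain ⟨K, hK, hdecay⟩ := exists_dft_samples_decay hper (p := 5) hg
  refine ⟨8 * C ^ 3 * K * ∑' n : ℤ, 1 / (n : ℝ) ^ 2 + 1, by positivity, ?_⟩
  intro N hN2 h2 φ p hp
  have hN : 0 < N := by omega
  set a : ℤ → ℂ := dft N fun j => g (gridPt N j)
  have ha : ∀ j, g (gridPt N j) = idft N a j := fun j =>
    (congrFun (idft_dft_of_periodic hN h2 (periodic_samples hN hper)) j).symm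
  set B : ℤ → ℝ := fun n => 4 * |(n : ℝ)| * (C ^ 3 * (1 + (n : ℝ) ^ 2)) with hB_def
  have hB : ∀ n, 0 ≤ B n := fun n => by positivity
  have hsum : ∑ n ∈ idxs N, ‖a n‖ * B n ≤ 8 * C ^ 3 * K * ∑' n : ℤ, 1 / (n : ℝ) ^ 2 + 1 :=
    (sum_coeff_mul_weight_le (by positivity) hK.le (hdecay N hN h2)).trans (by linarith)
  have hfinish : ∀ w : ℤ → ℤ → ℂ, (∀ n, ∀ l ∈ idxs N, ‖w n l‖ ≤ B n) →
      l2norm N (fun j => ∑ x ∈ idxs N ×ˢ idxs N,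
        a x.1 * (w x.1 x.2 * dft N φ x.2) * gridExp N (x.1 + x.2) j) ≤
      (8 * C ^ 3 * K * ∑' n : ℤ, 1 / (n : ℝ) ^ 2 + 1) * l2norm N φ := fun w hwB =>
    (l2norm_sum_shift_le hN h2 φ a w hB hwB).trans
      (mul_le_mul_of_nonneg_right hsum (l2norm_nonneg N φ))
  have hC3 : C ≤ C ^ 3 := le_self_pow₀ hC (by norm_num)
  constructor
  · convert hfinish (fun n l => (ρ (gridPt N l) : ℂ) *
      (hilbertSymbol N (n + l) - hilbertSymbol N l) * (Complex.I * (idxRep N (n + l) : ℂ) *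
        (ρ (gridPt N (idxRep N (n + l))) : ℂ)) ^ p) ?_ using 2
    · rw [filterP, commHh_idft hN h2 ha, Dh_iterate_sum hN h2]
      funext j
      refine Finset.sum_congr rfl fun x _ => ?_
      ring
    · intro n l hl
      obtain ⟨hσ, hz⟩ := hilbertSymbol_shift hN h2 l n
      rcases hz with hz | ⟨q, hq, -, hnear⟩
      · rw [hz, sub_self, mul_zero, zero_mul, norm_zero]
        exact hB n
      · obtain ⟨t, ht⟩ := dvd_sub_idxRep N (n + l)
        have hrep := idxRep_mem hN h2 (n + l)
        have hq' : N / 2 ∣ q - N * t :=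
          dvd_sub hq ((Int.ediv_dvd_of_dvd h2.two_dvd).mul_right t)
        have hnear' : |idxRep N (n + l) - (q - N * t)| ≤ |n| := by
          rwa [show idxRep N (n + l) - (q - N * t) = n + l - q by linarith]
        obtain ⟨hb, hwt⟩ := hw N hN h2 _ hrep
        have hpow := hwt |n| (abs_le_or_of_near_multiple h2 hrep hq' hnear') p hp
        have hD := abs_pow_mul_le_of_le hC hp hb
          (by simpa using hpow)
        rw [norm_mul, norm_mul, norm_pow, norm_mul, norm_mul, Complex.norm_I, one_mul,
          Complex.norm_real, Complex.norm_real, Complex.norm_intCast, Real.norm_eq_abs,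
          Real.norm_eq_abs]
        calc _ ≤ C * (4 * |(n : ℝ)|) * (C ^ 2 * (1 + (n : ℝ) ^ 2)) :=
              mul_le_mul (mul_le_mul (hw N hN h2 l hl).1 hσ (norm_nonneg _) (by linarith)) hD
                (by positivity) (by positivity)
          _ = B n := by
              simp only [hB_def]
              ring
  · convert hfinish (fun n l => (ρ (gridPt N l) : ℂ) *
      (if l = N / 2 then 0 else Complex.I * (l : ℂ)) ^ p *
        (hilbertSymbol N (n + l) - hilbertSymbol N l)) ?_ using 2
    · rw [filterP, commHh_idft hN h2 ha]
      funext j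
      refine Finset.sum_congr rfl fun x hx => ?_
      rw [dft_Sh_iterate hN h2 φ p (Finset.mem_product.1 hx).2]
      ring
    · intro n l hl
      obtain ⟨hσ, hz⟩ := hilbertSymbol_shift hN h2 l n
      rcases hz with hz | ⟨q, hq, hnear, -⟩
      · rw [hz, sub_self, mul_zero, norm_zero]
        exact hB n
      · have hpow := (hw N hN h2 l hl).2 |n| (abs_le_or_of_near_multiple h2 hl hq hnear) p hp
        have hs : ‖(if l = N / 2 then 0 else Complex.I * (l : ℂ))‖ ≤ |(l : ℝ)| := by
          split_ifs <;> simp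
        have hlhs : |ρ (gridPt N l)| * ‖(if l = N / 2 then 0 else Complex.I * (l : ℂ))‖ ^ p ≤
            C ^ 3 * (1 + (n : ℝ) ^ 2) := by
          calc _ ≤ |ρ (gridPt N l)| * |(l : ℝ)| ^ p := by gcongr
            _ ≤ C * (1 + (n : ℝ) ^ 2) := by simpa [mul_comm] using hpow
            _ ≤ _ := by gcongr
        rw [norm_mul, norm_mul, norm_pow, Complex.norm_real, Real.norm_eq_abs]
        calc _ ≤ C ^ 3 * (1 + (n : ℝ) ^ 2) * (4 * |(n : ℝ)|) :=
              mul_le_mul hlhs hσ (norm_nonneg _) (by positivity)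
          _ = B n := mul_comm _ _

end
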